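/- arXiv:0904.2040 — 5 statements merged into one kernel-verified Lean document; each statement's English description precedes it below -/
import Mathlib

section
/- Let w be a weight function on [-1,1], let π_0,…,π_{n-1} be the first n orthonormal polynomials for w, and let (λ_i, ν_i)_{i<n} be an n-point Gauss quadrature rule for w. Let A : ℝ → ℝ^{N×N} and b : ℝ → ℝ^N be such that A(λ_i) is invertible for each i < n, and set x(λ_i) = A(λ_i)⁻¹ b(λ_i). Then the degree-(n-1) pseudospectral approximation equals the degree-(n-1) collocation approximation: for every s ∈ ℝ, Σ_{k<n} (Σ_{i<n} ν_i x(λ_i) π_k(λ_i)) π_k(s) = Σ_{i<n} x(λ_i) ℓ_i(s), where ℓ_i(s) = Π_{j<n, j≠i} (s − λ_j)/(λ_i − λ_j) is the i-th Lagrange basis polynomial for the nodes λ_0,…,λ_{n-1}. -/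
open MeasureTheory Polynomial Matrix

/-- **Pseudospectral equals collocation.**
Given a weight function `w` on `[-1,1]`, the first `n` orthonormal polynomials `π`,
and an `n`-point Gauss quadrature rule `(lam i, ν i)` for `w`, for a parameterized
matrix equation `A(s) x(s) = b(s)` (with `A(lam i)` invertible), the degree-`(n-1)`
pseudospectral approximation coincides with the degree-`(n-1)` collocation
(Lagrange interpolation) approximation. -/
theorem pseudospectral_eq_collocation
    (n N : ℕ) (w : ℝ → ℝ)
    (hw_pos : ∀ s ∈ Set.Icc (-1 : ℝ) 1, 0 < w s)
    (hw_norm : (∫ s in (-1 : ℝ)..1, w s) = 1)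
    (π : ℕ → Polynomial ℝ)
    (hπdeg : ∀ k, (π k).degree = (k : ℕ))
    (hπorth : ∀ j k : ℕ, (∫ s in (-1 : ℝ)..1, (π j).eval s * (π k).eval s * w s)
      = if j = k then (1 : ℝ) else 0)
    (lam ν : Fin n → ℝ)
    (hlam_mem : ∀ i, lam i ∈ Set.Icc (-1 : ℝ) 1)
    (hlam_inj : Function.Injective lam)
    (hν_pos : ∀ i, 0 < ν i)
    (hexact : ∀ p : Polynomial ℝ, p.degree < (2 * n : ℕ) →
      (∫ s in (-1 : ℝ)..1, p.eval s * w s) = ∑ i, ν i * p.eval (lam i))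
    (A : ℝ → Matrix (Fin N) (Fin N) ℝ) (b : ℝ → Fin N → ℝ)
    (hAinv : ∀ i, IsUnit (A (lam i)))
    (x : Fin n → Fin N → ℝ)
    (hx : ∀ i, x i = (A (lam i))⁻¹ *ᵥ b (lam i)) :
    ∀ s : ℝ,
      (∑ k : Fin n, ((π (k : ℕ)).eval s) •
          (∑ i : Fin n, (ν i * (π (k : ℕ)).eval (lam i)) • x i))
        = ∑ i : Fin n,
            (∏ j ∈ Finset.univ.erase i, (s - lam j) / (lam i - lam j)) • x i := by
  classical
  -- discrete orthogonality
  have hdisc : ∀ j k : Fin n, ∑ i, (π j).eval (lam i) * (ν i * (π k).eval (lam i))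
      = if j = k then (1 : ℝ) else 0 := by
    intro j k
    have hd : (π j * π k).degree < (2 * n : ℕ) := by
      rw [degree_mul, hπdeg, hπdeg]
      have := j.2
      have := k.2
      have h : (j : ℕ) + (k : ℕ) < 2 * n := by omega
      exact_mod_cast h
    have h1 := hexact _ hd
    have h2 := hπorth j k
    simp only [eval_mul] at h1
    rw [h2] at h1
    simp only [Fin.ext_iff]
    rw [h1]
    exact Finset.sum_congr rfl fun i _ => by ring
  let P : Matrix (Fin n) (Fin n) ℝ := fun k i => (π k).eval (lam i)
  let Q : Matrix (Fin n) (Fin n) ℝ := fun i k => ν i * (π k).eval (lam i)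
  have hPQ : P * Q = 1 := by
    ext j k
    rw [Matrix.mul_apply, Matrix.one_apply]
    exact hdisc j k
  have hQP : Q * P = 1 := mul_eq_one_comm.mp hPQ
  have hinj : Set.InjOn lam (Finset.univ : Finset (Fin n)) := hlam_inj.injOn
  have hbasis : ∀ i : Fin n, ∑ k : Fin n, C (ν i * (π k).eval (lam i)) * π k
      = Lagrange.basis Finset.univ lam i := by
    intro i
    refine eq_of_degrees_lt_of_eval_index_eq (v := lam) Finset.univ hinj ?_ ?_ ?_
    · rw [Finset.card_univ, Fintype.card_fin, ← mem_degreeLT]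
      refine Submodule.sum_mem _ fun k _ => ?_
      rw [← smul_eq_C_mul]
      refine Submodule.smul_mem _ _ ?_
      rw [mem_degreeLT, hπdeg]
      exact_mod_cast k.2
    · rw [Lagrange.degree_basis hinj (Finset.mem_univ i)]
      have := i.2
      rw [Finset.card_univ, Fintype.card_fin]
      have h : n - 1 < n := by omega
      exact_mod_cast h
    · intro j _
      have h := congrFun (congrFun hQP i) j
      rw [Matrix.mul_apply, Matrix.one_apply] at h
      simp only [eval_finsetSum, eval_mul, eval_C]
      refine h.trans ?_
      split_ifs with hij
      · subst hij
        rw [Lagrange.eval_basis_self hinj (Finset.mem_univ _)]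
      · rw [Lagrange.eval_basis_of_ne hij (Finset.mem_univ _)]
  intro s
  simp only [Finset.smul_sum, smul_smul]
  rw [Finset.sum_comm]
  refine Finset.sum_congr rfl fun i _ => ?_
  rw [← Finset.sum_smul]
  congr 1
  have h := congrArg (eval s) (hbasis i)
  simp only [eval_finsetSum, eval_mul, eval_C, Lagrange.basis, Lagrange.basisDivisor,
    eval_prod, eval_sub, eval_X] at h
  calc _ = _ := Finset.sum_congr rfl fun k _ => by ring
    _ = _ := h
    _ = _ := Finset.prod_congr (by congr) fun j _ => by rw [div_eq_inv_mul]
end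

section
/- Let w be a weight function on [-1,1] and let (π_k)_{k≤n} be orthonormal polynomials for w satisfying the three-term recurrence β_{k+1}π_{k+1}(s) = (s−α_k)π_k(s) − β_kπ_{k−1}(s) with π_{−1}=0, π_0=1, β_k > 0, and let J_n be the associated n×n Jacobi matrix. Let (λ_i, ν_i)_{i<n} be an n-point Gauss quadrature rule for w whose nodes are zeros of π_n: π_n(λ_i) = 0 for all i < n. Then for every real polynomial p and all i, j < n, the (i,j) entry of the matrix p(J_n) (obtained by evaluating p at the matrix J_n) equals the Gauss quadrature approximation of ⟨p π_i π_j⟩: (p(J_n))_{ij} = Σ_{k<n} ν_k p(λ_k) π_i(λ_k) π_j(λ_k). -/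
open MeasureTheory Polynomial Matrix

/-- The `n × n` symmetric tridiagonal Jacobi matrix with diagonal entries
`α 0, …, α (n-1)` and off-diagonal entries `β 1, …, β (n-1)`. -/
def jacobiMatrix (α β : ℕ → ℝ) (n : ℕ) : Matrix (Fin n) (Fin n) ℝ :=
  Matrix.of fun i j =>
    if (i : ℕ) = (j : ℕ) then α (i : ℕ)
    else if (i : ℕ) + 1 = (j : ℕ) ∨ (j : ℕ) + 1 = (i : ℕ) then β (max (i : ℕ) (j : ℕ))
    else 0

theorem jacobi_mulVec_aux (n : ℕ) (α β f : ℕ → ℝ) (t : ℝ)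
    (hrec : ∀ k : ℕ, β (k + 1) * f (k + 1)
      = (t - α k) * f k - β k * (if k = 0 then 0 else f (k - 1)))
    (hz : f n = 0) :
    (jacobiMatrix α β n) *ᵥ (fun i : Fin n => f i) = t • (fun i : Fin n => f i) := by
  ext ⟨i, hi⟩
  have h1 : ∀ j : Fin n, jacobiMatrix α β n ⟨i, hi⟩ j * f j
      = (fun j : ℕ => (if j = i then α i * f i else 0)
        + (if j = i + 1 then β (i + 1) * f (i + 1) else 0)
        + (if j + 1 = i then β i * f j else 0)) (j : ℕ) := by
    rintro ⟨j, hj⟩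
    simp only [jacobiMatrix, Matrix.of_apply]
    by_cases h : i = j
    · subst h; simp
    · by_cases h2 : i + 1 = j
      · subst h2
        have : ¬ (i + 1 + 1 = i) := by omega
        simp [this]
      · by_cases h3 : j + 1 = i
        · subst h3
          have : ¬ (j = j + 1 + 1) := by omega
          simp [this]
        · have a1 : ¬ j = i := by omega
          have a2 : ¬ j = i + 1 := by omega
          simp [h, h2, h3, a1, a2]
  simp only [Matrix.mulVec, dotProduct, Pi.smul_apply, smul_eq_mul]
  rw [Finset.sum_congr rfl (fun j _ => h1 j)]
  refine (Fin.sum_univ_eq_sum_range (fun j : ℕ => (if j = i then α i * f i else 0)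
        + (if j = i + 1 then β (i + 1) * f (i + 1) else 0)
        + (if j + 1 = i then β i * f j else 0)) n).trans ?_
  rw [Finset.sum_add_distrib, Finset.sum_add_distrib, Finset.sum_ite_eq', Finset.sum_ite_eq']
  have e2 : (if i + 1 ∈ Finset.range n then β (i + 1) * f (i + 1) else 0)
      = β (i + 1) * f (i + 1) := by
    split_ifs with h
    · rfl
    · have : i + 1 = n := by simp at h; omega
      rw [this, hz, mul_zero]
  have e3 : ∑ j ∈ Finset.range n, (if j + 1 = i then β i * f j else 0)
      = β i * (if i = 0 then 0 else f (i - 1)) := by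
    cases i with
    | zero => simp
    | succ m =>
      have hm : m ∈ Finset.range n := by simp; omega
      simp only [Nat.add_right_cancel_iff]
      rw [Finset.sum_ite_eq', if_pos hm]
      simp
  rw [e2, e3, if_pos (Finset.mem_range.2 hi), hrec i]
  ring

theorem aeval_mulVec_aux {n : ℕ} (A : Matrix (Fin n) (Fin n) ℝ) (v : Fin n → ℝ) (t : ℝ)
    (h : A *ᵥ v = t • v) (p : Polynomial ℝ) :
    (Polynomial.aeval A p) *ᵥ v = p.eval t • v := by
  induction p using Polynomial.induction_on' with
  | add p q hp hq => simp [Matrix.add_mulVec, hp, hq, add_smul]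
  | monomial m a =>
    have hm : (A ^ m) *ᵥ v = t ^ m • v := by
      induction m with
      | zero => simp
      | succ m ih =>
        rw [pow_succ, ← Matrix.mulVec_mulVec, h, Matrix.mulVec_smul, ih, smul_smul, pow_succ,
          mul_comm]
    rw [Polynomial.aeval_monomial, Polynomial.eval_monomial, ← Algebra.smul_def,
      Matrix.smul_mulVec, hm, smul_smul]

/-- **Polynomials of the Jacobi matrix give Gauss quadrature approximations.**
For orthonormal polynomials `π` for a weight `w` on `[-1,1]` with three-term
recurrence coefficients `α`, `β` and Jacobi matrix `J n`, and for an `n`-point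
Gauss quadrature rule whose nodes are the zeros of `π n`, the `(i,j)` entry of
`p (J n)` (polynomial evaluation at the matrix) equals the Gauss quadrature
approximation of `⟨p * π i * π j⟩`. -/
theorem aeval_jacobiMatrix_entry_eq_quadrature
    (n : ℕ) (w : ℝ → ℝ)
    (hw_pos : ∀ s ∈ Set.Icc (-1 : ℝ) 1, 0 < w s)
    (hw_norm : (∫ s in (-1 : ℝ)..1, w s) = 1)
    (π : ℕ → Polynomial ℝ)
    (hπ0 : π 0 = 1)
    (hπdeg : ∀ k, (π k).degree = (k : ℕ))
    (hπorth : ∀ j k : ℕ, (∫ s in (-1 : ℝ)..1, (π j).eval s * (π k).eval s * w s)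
      = if j = k then (1 : ℝ) else 0)
    (α β : ℕ → ℝ) (hβ : ∀ k : ℕ, 0 < β (k + 1))
    (hrec : ∀ (k : ℕ) (s : ℝ), β (k + 1) * (π (k + 1)).eval s
      = (s - α k) * (π k).eval s - β k * (if k = 0 then 0 else (π (k - 1)).eval s))
    (lam ν : Fin n → ℝ)
    (hlam_mem : ∀ i, lam i ∈ Set.Icc (-1 : ℝ) 1)
    (hlam_inj : Function.Injective lam)
    (hν_pos : ∀ i, 0 < ν i)
    (hexact : ∀ p : Polynomial ℝ, p.degree < (2 * n : ℕ) →
      (∫ s in (-1 : ℝ)..1, p.eval s * w s) = ∑ i, ν i * p.eval (lam i))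
    (hzeros : ∀ i, (π n).eval (lam i) = 0) :
    ∀ (p : Polynomial ℝ) (i j : Fin n),
      (Polynomial.aeval (jacobiMatrix α β n) p) i j
        = ∑ k : Fin n, ν k * p.eval (lam k) *
            (π (i : ℕ)).eval (lam k) * (π (j : ℕ)).eval (lam k) := by
  intro p i j
  have hv : ∀ k, (Polynomial.aeval (jacobiMatrix α β n) p) *ᵥ
      (fun i : Fin n => (π i).eval (lam k))
      = p.eval (lam k) • (fun i : Fin n => (π i).eval (lam k)) := fun k =>
    aeval_mulVec_aux _ _ _ (jacobi_mulVec_aux n α β (fun m => (π m).eval (lam k)) (lam k)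
      (fun m => hrec m (lam k)) (hzeros k)) p
  have ho : ∀ m : Fin n, ∑ k, ν k * ((π m).eval (lam k) * (π j).eval (lam k))
      = if m = j then 1 else 0 := by
    intro m
    have := hexact (π m * π j) (by
      rw [Polynomial.degree_mul, hπdeg, hπdeg, ← Nat.cast_add, Nat.cast_lt]
      omega)
    simp only [Polynomial.eval_mul] at this
    rw [← this, hπorth]
    simp [Fin.ext_iff]
  set M := Polynomial.aeval (jacobiMatrix α β n) p with hM
  have hv' : ∀ k, ∑ m, M i m * (π m).eval (lam k) = p.eval (lam k) * (π i).eval (lam k) :=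
    fun k => congrFun (hv k) i
  calc M i j = ∑ m, M i m * (if m = j then 1 else 0) := by simp
    _ = ∑ m, ∑ k, ν k * (M i m * (π m).eval (lam k)) * (π j).eval (lam k) := by
      refine Finset.sum_congr rfl fun m _ => ?_
      rw [← ho m, Finset.mul_sum]
      exact Finset.sum_congr rfl fun k _ => by ring
    _ = _ := by
      rw [Finset.sum_comm]
      refine Finset.sum_congr rfl fun k _ => ?_
      rw [← Finset.sum_mul, ← Finset.mul_sum, hv' k]
      ring
end

section
/- Let w be a weight function on [-1,1] and let (π_k)_{k≤n} be orthonormal polynomials for w satisfying the three-term recurrence β_{k+1}π_{k+1}(s) = (s−α_k)π_k(s) − β_kπ_{k−1}(s) with π_{−1}=0, π_0=1, β_k > 0, and let J_n be the associated n×n Jacobi matrix. Let (λ_i, ν_i)_{i<n} be an n-point Gauss quadrature rule for w whose nodes are zeros of π_n. Then for every function f : ℝ → ℝ and for every orthogonal n×n matrix Q and diagonal n×n matrix Λ with J_n = Q Λ Qᵀ, the matrix f(J_n) := Q · diag(f(Λ_{00}),…,f(Λ_{n−1,n−1})) · Qᵀ satisfies, for all i, j < n, (f(J_n))_{ij} =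 Σ_{k<n} ν_k f(λ_k) π_i(λ_k) π_j(λ_k); in particular f(J_n) equals the matrix of Gauss quadrature approximations ⟨f π_i π_j⟩_n and is independent of the chosen eigendecomposition. -/
open MeasureTheory Polynomial Matrix

theorem jacobi_mul_aux (n : ℕ) (p : ℕ → ℝ) (α β : ℕ → ℝ) (x : ℝ)
    (hrec : ∀ k : ℕ, β (k + 1) * p (k + 1)
      = (x - α k) * p k - β k * (if k = 0 then 0 else p (k - 1)))
    (hz : p n = 0) (i : Fin n) :
    ∑ j : Fin n, jacobiMatrix α β n i j * p j = x * p i := by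
  have h1 : ∀ j : Fin n, jacobiMatrix α β n i j * p j =
      (fun j : ℕ => (if (i : ℕ) = j then α i * p i else 0)
        + (if (i : ℕ) + 1 = j then β (i + 1) * p (i + 1) else 0)
        + (if j + 1 = (i : ℕ) then β i * p j else 0)) (j : ℕ) := by
    intro j
    obtain ⟨i, hi⟩ := i
    obtain ⟨j, hj⟩ := j
    simp only [jacobiMatrix, Matrix.of_apply]
    rcases lt_trichotomy i j with h | h | h
    · by_cases h' : i + 1 = j
      · subst h'
        simp
        intro h; omega
      · rw [if_neg (by omega), if_neg (by omega), if_neg (by omega), if_neg (by omega),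
          if_neg (by omega)]
        simp
    · subst h
      simp
    · by_cases h' : j + 1 = i
      · subst h'
        simp
        intro h; omega
      · rw [if_neg (by omega), if_neg (by omega), if_neg (by omega), if_neg (by omega),
          if_neg (by omega)]
        simp
  rw [Finset.sum_congr rfl (fun j _ => h1 j),
    Fin.sum_univ_eq_sum_range (fun j : ℕ => (if (i : ℕ) = j then α i * p i else 0)
        + (if (i : ℕ) + 1 = j then β (i + 1) * p (i + 1) else 0)
        + (if j + 1 = (i : ℕ) then β i * p j else 0)) n]
  rw [Finset.sum_add_distrib, Finset.sum_add_distrib, Finset.sum_ite_eq, Finset.sum_ite_eq]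
  have hi := i.2
  have h2 : (if (i : ℕ) + 1 ∈ Finset.range n then β (i + 1) * p (i + 1) else 0)
      = β (i + 1) * p (i + 1) := by
    split_ifs with h
    · rfl
    · have : (i : ℕ) + 1 = n := by
        simp at h; omega
      rw [this, hz]; simp
  have h3 : (∑ j ∈ Finset.range n, if j + 1 = (i : ℕ) then β i * p j else 0)
      = β i * (if (i : ℕ) = 0 then 0 else p (i - 1)) := by
    by_cases h : (i : ℕ) = 0
    · rw [if_pos h, mul_zero]
      apply Finset.sum_eq_zero
      intro j _
      rw [if_neg (by omega)]
    · rw [if_neg h, Finset.sum_eq_single ((i : ℕ) - 1)]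
      · rw [if_pos (by omega)]
      · intro j _ hj
        rw [if_neg (by omega)]
      · intro hh
        simp at hh; omega
  rw [h2, h3, hrec, if_pos (Finset.mem_range.2 hi)]
  ring

/-- **Functions of the Jacobi matrix give Gauss quadrature approximations.**
For orthonormal polynomials `π` for a weight `w` on `[-1,1]` with three-term
recurrence coefficients `α`, `β` and Jacobi matrix `J n`, and for an `n`-point
Gauss quadrature rule whose nodes are the zeros of `π n`: for every function
`f : ℝ → ℝ` and every eigendecomposition `J n = Q * diagonal d * Qᵀ` with `Q`
orthogonal, the matrix `f (J n) := Q * diagonal (f ∘ d) * Qᵀ` has `(i,j)` entry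
equal to the Gauss quadrature approximation `⟨f * π i * π j⟩ₙ`; in particular
it is independent of the chosen eigendecomposition. -/
theorem matrixFunction_jacobiMatrix_entry_eq_quadrature
    (n : ℕ) (w : ℝ → ℝ)
    (hw_pos : ∀ s ∈ Set.Icc (-1 : ℝ) 1, 0 < w s)
    (hw_norm : (∫ s in (-1 : ℝ)..1, w s) = 1)
    (π : ℕ → Polynomial ℝ)
    (hπ0 : π 0 = 1)
    (hπdeg : ∀ k, (π k).degree = (k : ℕ))
    (hπorth : ∀ j k : ℕ, (∫ s in (-1 : ℝ)..1, (π j).eval s * (π k).eval s * w s)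
      = if j = k then (1 : ℝ) else 0)
    (α β : ℕ → ℝ) (hβ : ∀ k : ℕ, 0 < β (k + 1))
    (hrec : ∀ (k : ℕ) (s : ℝ), β (k + 1) * (π (k + 1)).eval s
      = (s - α k) * (π k).eval s - β k * (if k = 0 then 0 else (π (k - 1)).eval s))
    (lam ν : Fin n → ℝ)
    (hlam_mem : ∀ i, lam i ∈ Set.Icc (-1 : ℝ) 1)
    (hlam_inj : Function.Injective lam)
    (hν_pos : ∀ i, 0 < ν i)
    (hexact : ∀ p : Polynomial ℝ, p.degree < (2 * n : ℕ) →
      (∫ s in (-1 : ℝ)..1, p.eval s * w s) = ∑ i, ν i * p.eval (lam i))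
    (hzeros : ∀ i, (π n).eval (lam i) = 0) :
    ∀ (f : ℝ → ℝ) (Q : Matrix (Fin n) (Fin n) ℝ) (d : Fin n → ℝ),
      Q * Qᵀ = 1 → Qᵀ * Q = 1 →
      jacobiMatrix α β n = Q * Matrix.diagonal d * Qᵀ →
      ∀ i j : Fin n,
        (Q * Matrix.diagonal (fun k => f (d k)) * Qᵀ) i j
          = ∑ k : Fin n, ν k * f (lam k) *
              (π (i : ℕ)).eval (lam k) * (π (j : ℕ)).eval (lam k) := by
  intro f Q d hQ1 hQ2 hJ i j
  set P : Matrix (Fin n) (Fin n) ℝ := Matrix.of fun i k => (π (i : ℕ)).eval (lam k) with hP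
  have hJP : jacobiMatrix α β n * P = P * Matrix.diagonal lam := by
    ext a b
    rw [Matrix.mul_apply, Matrix.mul_diagonal]
    have := jacobi_mul_aux n (fun k => (π k).eval (lam b)) α β (lam b)
      (fun k => hrec k (lam b)) (hzeros b) a
    simp only [hP, Matrix.of_apply]
    rw [this, mul_comm]
  have hPP : P * (Matrix.diagonal ν * Pᵀ) = 1 := by
    ext a b
    have hdeg : (π (a : ℕ) * π (b : ℕ)).degree < (2 * n : ℕ) := by
      rw [Polynomial.degree_mul, hπdeg, hπdeg]
      have := a.2
      have := b.2
      exact_mod_cast (by omega : (a : ℕ) + (b : ℕ) < 2 * n)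
    have h := hexact _ hdeg
    simp only [Polynomial.eval_mul] at h
    rw [hπorth] at h
    rw [Matrix.mul_apply, Matrix.one_apply]
    simp only [Matrix.diagonal_mul, Matrix.transpose_apply, hP, Matrix.of_apply]
    simp only [Fin.ext_iff]
    rw [h]
    exact Finset.sum_congr rfl fun k _ => by ring
  have hR : Matrix.diagonal d * (Qᵀ * P) = (Qᵀ * P) * Matrix.diagonal lam := by
    rw [Matrix.mul_assoc, ← hJP, hJ]
    simp only [← Matrix.mul_assoc]
    rw [hQ2, Matrix.one_mul]
  have hRf : Matrix.diagonal (fun k => f (d k)) * (Qᵀ * P)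
      = (Qᵀ * P) * Matrix.diagonal (fun k => f (lam k)) := by
    ext a b
    have h := congrFun (congrFun hR a) b
    rw [Matrix.diagonal_mul, Matrix.mul_diagonal] at h ⊢
    by_cases hab : d a = lam b
    · rw [hab, mul_comm]
    · have h0 : (Qᵀ * P) a b = 0 := by
        have : (d a - lam b) * (Qᵀ * P) a b = 0 := by linarith
        exact (mul_eq_zero.1 this).resolve_left (sub_ne_zero.2 hab)
      rw [h0]; simp
  have hfin : Q * Matrix.diagonal (fun k => f (d k)) * Qᵀ
      = P * Matrix.diagonal (fun k => f (lam k)) * (Matrix.diagonal ν * Pᵀ) := by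
    calc Q * Matrix.diagonal (fun k => f (d k)) * Qᵀ
        = Q * Matrix.diagonal (fun k => f (d k)) * Qᵀ * (P * (Matrix.diagonal ν * Pᵀ)) := by
          rw [hPP, Matrix.mul_one]
      _ = Q * (Matrix.diagonal (fun k => f (d k)) * (Qᵀ * P)) * (Matrix.diagonal ν * Pᵀ) := by
          simp only [Matrix.mul_assoc]
      _ = (Q * Qᵀ) * P * Matrix.diagonal (fun k => f (lam k)) * (Matrix.diagonal ν * Pᵀ) := by
          rw [hRf]; simp only [Matrix.mul_assoc]
      _ = _ := by rw [hQ1, Matrix.one_mul]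
  rw [hfin, Matrix.mul_apply]
  simp only [Matrix.diagonal_mul, Matrix.mul_diagonal, Matrix.transpose_apply, hP, Matrix.of_apply]
  exact Finset.sum_congr rfl fun k _ => by ring
end

section
/- Let w be a weight function on [-1,1], let π_0,…,π_{n-1} be the first n orthonormal polynomials for w, and let (λ_i, ν_i)_{i<n} be an n-point Gauss quadrature rule for w. Let A : ℝ → ℝ^{N×N} and b : ℝ → ℝ^N with A(λ_i) invertible for each i < n, set x(λ_i) = A(λ_i)⁻¹ b(λ_i), and let X_p be the N×n pseudospectral coefficient matrix with columns X_p(:,k) = Σ_{i<n} ν_i x(λ_i) π_k(λ_i). Then X_p solves the Galerkin system with all integrals replaced by the n-point Gauss quadrature rule: for every j < n, Σ_{k<n} (Σ_{i<n} ν_i π_j(λ_i) π_k(λ_i) A(λ_i)) · X_p(:,k) = Σ_{i<n} ν_i π_j(λ_i) b(λ_i). -/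
open MeasureTheory Polynomial Matrix

/-- **The pseudospectral solution solves the quadrature-approximated Galerkin system.**
With `w` a weight function on `[-1,1]`, `π` the orthonormal polynomials for `w`, and
`(lam i, ν i)` an `n`-point Gauss quadrature rule for `w`, the matrix `Xp` of
pseudospectral coefficients `Xp(:,k) = ∑ i, ν i • x(lam i) * π k (lam i)` (where
`x(lam i) = A(lam i)⁻¹ b(lam i)`) solves the Galerkin system in which every integral
is replaced by the `n`-point Gauss quadrature rule. -/
theorem pseudospectral_solves_quadrature_galerkin
    (n N : ℕ) (w : ℝ → ℝ)
    (hw_pos : ∀ s ∈ Set.Icc (-1 : ℝ) 1, 0 < w s)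
    (hw_norm : (∫ s in (-1 : ℝ)..1, w s) = 1)
    (π : ℕ → Polynomial ℝ)
    (hπdeg : ∀ k, (π k).degree = (k : ℕ))
    (hπorth : ∀ j k : ℕ, (∫ s in (-1 : ℝ)..1, (π j).eval s * (π k).eval s * w s)
      = if j = k then (1 : ℝ) else 0)
    (lam ν : Fin n → ℝ)
    (hlam_mem : ∀ i, lam i ∈ Set.Icc (-1 : ℝ) 1)
    (hlam_inj : Function.Injective lam)
    (hν_pos : ∀ i, 0 < ν i)
    (hexact : ∀ p : Polynomial ℝ, p.degree < (2 * n : ℕ) →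
      (∫ s in (-1 : ℝ)..1, p.eval s * w s) = ∑ i, ν i * p.eval (lam i))
    (A : ℝ → Matrix (Fin N) (Fin N) ℝ) (b : ℝ → Fin N → ℝ)
    (hAinv : ∀ i, IsUnit (A (lam i)))
    (Xp : Matrix (Fin N) (Fin n) ℝ)
    (hXp : ∀ (l : Fin N) (k : Fin n),
      Xp l k = ∑ i : Fin n,
        ν i * ((A (lam i))⁻¹ *ᵥ b (lam i)) l * (π (k : ℕ)).eval (lam i)) :
    ∀ j : Fin n,
      (∑ k : Fin n,
        (∑ i : Fin n, (ν i * (π (j : ℕ)).eval (lam i) * (π (k : ℕ)).eval (lam i)) • A (lam i))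
          *ᵥ (fun l => Xp l k))
      = ∑ i : Fin n, (ν i * (π (j : ℕ)).eval (lam i)) • b (lam i) := by
  have hPQ : (Matrix.of fun (k i : Fin n) => (π (k : ℕ)).eval (lam i)) *
      (Matrix.of fun (i k : Fin n) => ν i * (π (k : ℕ)).eval (lam i)) = 1 := by
    ext j k
    have hd : (π (j : ℕ) * π (k : ℕ)).degree < (2 * n : ℕ) := by
      rw [Polynomial.degree_mul, hπdeg, hπdeg]
      have h1 := j.isLt
      have h2 := k.isLt
      have h3 : (j : ℕ) + (k : ℕ) < 2 * n := by omega
      exact_mod_cast h3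
    have h := hexact _ hd
    simp only [Polynomial.eval_mul] at h
    rw [hπorth] at h
    rw [Matrix.mul_apply, Matrix.one_apply]
    simp only [Matrix.of_apply]
    rw [show (if j = k then (1 : ℝ) else 0) = if (j : ℕ) = (k : ℕ) then 1 else 0 by
      simp only [Fin.ext_iff], h]
    refine Finset.sum_congr rfl fun i _ => ?_
    ring
  have hQP := mul_eq_one_comm.mp hPQ
  have hδ : ∀ m i : Fin n, ∑ k : Fin n, ν m * (π (k : ℕ)).eval (lam m) *
      (π (k : ℕ)).eval (lam i) = if m = i then 1 else 0 := by
    intro m i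
    have h := congrFun (congrFun hQP m) i
    rw [Matrix.mul_apply, Matrix.one_apply] at h
    simpa only [Matrix.of_apply] using h
  have hx : ∀ i : Fin n, (∑ k : Fin n, (π (k : ℕ)).eval (lam i) • (fun l => Xp l k))
      = (A (lam i))⁻¹ *ᵥ b (lam i) := by
    intro i
    ext l
    simp only [Finset.sum_apply, Pi.smul_apply, smul_eq_mul, hXp, Finset.mul_sum]
    rw [Finset.sum_comm]
    have : ∀ m : Fin n, (∑ k : Fin n, (π (k : ℕ)).eval (lam i) *
        (ν m * ((A (lam m))⁻¹ *ᵥ b (lam m)) l * (π (k : ℕ)).eval (lam m)))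
        = (if m = i then 1 else 0) * ((A (lam m))⁻¹ *ᵥ b (lam m)) l := by
      intro m
      rw [← hδ m i, Finset.sum_mul]
      refine Finset.sum_congr rfl fun k _ => ?_
      ring
    simp only [this]
    simp
  intro j
  simp only [Matrix.sum_mulVec, Matrix.smul_mulVec]
  rw [Finset.sum_comm]
  refine Finset.sum_congr rfl fun i _ => ?_
  have hb : A (lam i) *ᵥ ((A (lam i))⁻¹ *ᵥ b (lam i)) = b (lam i) := by
    rw [Matrix.mulVec_mulVec, Matrix.mul_nonsing_inv _ ((Matrix.isUnit_iff_isUnit_det _).mp (hAinv i)),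
      Matrix.one_mulVec]
  conv_rhs => rw [← hb, ← hx i]
  rw [Matrix.mulVec_sum, Finset.smul_sum]
  refine Finset.sum_congr rfl fun k _ => ?_
  rw [Matrix.mulVec_smul, smul_smul]
end

section
/- Let w be a weight function on [-1,1], let π_0,…,π_{n-1} be the first n orthonormal polynomials for w, and let (λ_i, ν_i)_{i<n} be an n-point Gauss quadrature rule for w. Suppose A(s) = A_0 + s A_1 for constant matrices A_0, A_1 ∈ ℝ^{N×N} (entries of A are polynomials of degree at most 1), suppose every entry of b : ℝ → ℝ^N is a polynomial of degree at most m_b, and suppose n ≥ m_b. Assume A(λ_i) is invertible for each i < n and let X_p be the N×n pseudospectral coefficient matrix with columns X_p(:,k) = Σ_{i<n} ν_i A(λ_i)⁻¹ b(λ_i) π_k(λ_i). Then X_p satisfies the exact Galerkin system: for every j < n, Σ_{k<n} (∫_{-1}^{1} π_j(s) π_k(s) A(s) w(s) ds) · X_p(:,k) = ∫_{-1}^{1} π_j(s) b(s) w(s) ds (integrals taken entrywise). Consequently, if the Galerkin system has a unique solution X_g, then the Galerkin and pseudospectral approximations coincide: X_g = X_p. -/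
open MeasureTheory Polynomial Matrix

/-- An `N × n` coefficient matrix `X` solves the `n`-term Galerkin system for the
parameterized matrix equation `A(s) x(s) = b(s)` with weight `w` and orthonormal
polynomials `π` if `∑ k, ⟨π j * π k * A⟩ * X(:,k) = ⟨π j * b⟩` for all `j < n`. -/
def GalerkinSolves (N n : ℕ) (w : ℝ → ℝ) (π : ℕ → Polynomial ℝ)
    (A : ℝ → Matrix (Fin N) (Fin N) ℝ) (b : ℝ → Fin N → ℝ)
    (X : Matrix (Fin N) (Fin n) ℝ) : Prop :=
  ∀ (j : Fin n) (k' : Fin N),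
    (∑ k : Fin n, ∑ l : Fin N,
      (∫ s in (-1 : ℝ)..1, (π (j : ℕ)).eval s * (π (k : ℕ)).eval s * A s k' l * w s) * X l k)
    = ∫ s in (-1 : ℝ)..1, (π (j : ℕ)).eval s * b s k' * w s

/-- **Equivalence of Galerkin and pseudospectral approximations for linear `A` and
polynomial `b`.**  If `A(s) = A₀ + s A₁` and every entry of `b` is a polynomial of
degree at most `m_b ≤ n`, then the pseudospectral coefficient matrix `Xp` (computed
with an `n`-point Gauss rule) satisfies the exact Galerkin system; consequently if the
Galerkin system has a unique solution `Xg`, then `Xg = Xp`. -/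
theorem galerkin_eq_pseudospectral_of_linear
    (n N m_b : ℕ) (w : ℝ → ℝ)
    (hw_pos : ∀ s ∈ Set.Icc (-1 : ℝ) 1, 0 < w s)
    (hw_norm : (∫ s in (-1 : ℝ)..1, w s) = 1)
    (π : ℕ → Polynomial ℝ)
    (hπdeg : ∀ k, (π k).degree = (k : ℕ))
    (hπorth : ∀ j k : ℕ, (∫ s in (-1 : ℝ)..1, (π j).eval s * (π k).eval s * w s)
      = if j = k then (1 : ℝ) else 0)
    (lam ν : Fin n → ℝ)
    (hlam_mem : ∀ i, lam i ∈ Set.Icc (-1 : ℝ) 1)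
    (hlam_inj : Function.Injective lam)
    (hν_pos : ∀ i, 0 < ν i)
    (hexact : ∀ p : Polynomial ℝ, p.degree < (2 * n : ℕ) →
      (∫ s in (-1 : ℝ)..1, p.eval s * w s) = ∑ i, ν i * p.eval (lam i))
    (A₀ A₁ : Matrix (Fin N) (Fin N) ℝ) (b : ℝ → Fin N → ℝ)
    (hb : ∀ k : Fin N, ∃ q : Polynomial ℝ, q.degree ≤ (m_b : ℕ) ∧ ∀ s, b s k = q.eval s)
    (hnm : m_b ≤ n)
    (hAinv : ∀ i, IsUnit (A₀ + lam i • A₁))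
    (Xp : Matrix (Fin N) (Fin n) ℝ)
    (hXp : ∀ (l : Fin N) (k : Fin n),
      Xp l k = ∑ i : Fin n,
        ν i * ((A₀ + lam i • A₁)⁻¹ *ᵥ b (lam i)) l * (π (k : ℕ)).eval (lam i)) :
    GalerkinSolves N n w π (fun s => A₀ + s • A₁) b Xp ∧
    ∀ Xg : Matrix (Fin N) (Fin n) ℝ,
      GalerkinSolves N n w π (fun s => A₀ + s • A₁) b Xg →
      (∀ Y : Matrix (Fin N) (Fin n) ℝ,
        GalerkinSolves N n w π (fun s => A₀ + s • A₁) b Y → Y = Xg) →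
      Xg = Xp := by
  have hsolve : GalerkinSolves N n w π (fun s => A₀ + s • A₁) b Xp := by
    -- discrete orthogonality
    have h1 : (Matrix.of fun k i : Fin n => (π (k : ℕ)).eval (lam i)) *
        (Matrix.of fun i k : Fin n => ν i * (π (k : ℕ)).eval (lam i)) = 1 := by
      ext j k
      have hd : (π (j : ℕ) * π (k : ℕ)).degree < (2 * n : ℕ) := by
        rw [Polynomial.degree_mul, hπdeg, hπdeg]
        have := j.2
        have := k.2
        exact_mod_cast (by omega : (j : ℕ) + (k : ℕ) < 2 * n)
      have h := hexact _ hd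
      simp only [Polynomial.eval_mul] at h
      rw [hπorth] at h
      rw [Matrix.mul_apply, Matrix.one_apply]
      simp only [Matrix.of_apply]
      rw [show (if j = k then (1 : ℝ) else 0) = if (j : ℕ) = (k : ℕ) then (1 : ℝ) else 0 by
        simp [Fin.ext_iff], h]
      refine Finset.sum_congr rfl fun i _ => ?_
      ring
    have h2 := mul_eq_one_comm.mp h1
    have h3 : ∀ i i' : Fin n, (∑ k : Fin n, ν i * (π (k : ℕ)).eval (lam i) *
        (π (k : ℕ)).eval (lam i')) = if i = i' then (1 : ℝ) else 0 := by
      intro i i'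
      have := congrFun (congrFun h2 i) i'
      rwa [Matrix.mul_apply, Matrix.one_apply] at this
    -- interpolation property
    have h4 : ∀ (i : Fin n) (l : Fin N), (∑ k : Fin n, (π (k : ℕ)).eval (lam i) * Xp l k)
        = ((A₀ + lam i • A₁)⁻¹ *ᵥ b (lam i)) l := by
      intro i l
      simp only [hXp, Finset.mul_sum]
      rw [Finset.sum_comm]
      have : ∀ i' : Fin n, (∑ k : Fin n, (π (k : ℕ)).eval (lam i) *
          (ν i' * ((A₀ + lam i' • A₁)⁻¹ *ᵥ b (lam i')) l * (π (k : ℕ)).eval (lam i')))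
          = ((A₀ + lam i' • A₁)⁻¹ *ᵥ b (lam i')) l * if i' = i then (1 : ℝ) else 0 := by
        intro i'
        rw [← h3 i' i, Finset.mul_sum]
        refine Finset.sum_congr rfl fun k _ => ?_
        ring
      simp only [this]
      simp
    intro j k'
    have hjn := j.2
    obtain ⟨q, hq, hbq⟩ := hb k'
    have hR : (∫ s in (-1 : ℝ)..1, (π (j : ℕ)).eval s * b s k' * w s)
        = ∑ i, ν i * ((π (j : ℕ)).eval (lam i) * b (lam i) k') := by
      have hd : (π (j : ℕ) * q).degree < (2 * n : ℕ) := by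
        rw [Polynomial.degree_mul, hπdeg]
        calc ((j : ℕ) : WithBot ℕ) + q.degree ≤ ((j : ℕ) : WithBot ℕ) + (m_b : ℕ) := by gcongr
          _ < _ := by exact_mod_cast (by omega : (j : ℕ) + m_b < 2 * n)
      have h := hexact _ hd
      simpa only [Polynomial.eval_mul, ← hbq] using h
    have hL : ∀ (k : Fin n) (l : Fin N),
        (∫ s in (-1 : ℝ)..1, (π (j : ℕ)).eval s * (π (k : ℕ)).eval s *
          (A₀ + s • A₁) k' l * w s)
        = ∑ i, ν i * ((π (j : ℕ)).eval (lam i) * (π (k : ℕ)).eval (lam i) *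
          (A₀ + lam i • A₁) k' l) := by
      intro k l
      have hkn := k.2
      have hd : (π (j : ℕ) * π (k : ℕ) * (C (A₀ k' l) + X * C (A₁ k' l) : Polynomial ℝ)).degree
          < ((2 * n : ℕ) : WithBot ℕ) := by
        have hlin : (C (A₀ k' l) + X * C (A₁ k' l) : Polynomial ℝ).degree ≤ ((1 : ℕ) : WithBot ℕ) := by
          rw [add_comm, mul_comm]
          exact_mod_cast Polynomial.degree_linear_le
        rw [Polynomial.degree_mul, Polynomial.degree_mul, hπdeg, hπdeg]
        calc ((j : ℕ) : WithBot ℕ) + ((k : ℕ) : WithBot ℕ) + _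
            ≤ ((j : ℕ) : WithBot ℕ) + ((k : ℕ) : WithBot ℕ) + (1 : ℕ) := by gcongr
          _ < _ := by exact_mod_cast (by omega : (j : ℕ) + (k : ℕ) + 1 < 2 * n)
      have h := hexact _ hd
      simpa only [Polynomial.eval_mul, Polynomial.eval_add, Polynomial.eval_C,
        Polynomial.eval_X, Matrix.add_apply, Matrix.smul_apply, smul_eq_mul] using h
    rw [hR]
    simp only [hL]
    have hA : ∀ i, b (lam i) k' = ∑ l, (A₀ + lam i • A₁) k' l *
        ∑ k : Fin n, (π (k : ℕ)).eval (lam i) * Xp l k := by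
      intro i
      simp only [h4]
      have hu : (A₀ + lam i • A₁) *ᵥ ((A₀ + lam i • A₁)⁻¹ *ᵥ b (lam i)) = b (lam i) := by
        rw [Matrix.mulVec_mulVec, Matrix.mul_nonsing_inv _
          ((Matrix.isUnit_iff_isUnit_det _).mp (hAinv i)), Matrix.one_mulVec]
      exact (congrFun hu k').symm
    simp only [hA, Finset.mul_sum, Finset.sum_mul]
    rw [Finset.sum_comm]
    rw [Finset.sum_congr rfl fun l _ => Finset.sum_comm]
    rw [Finset.sum_comm]
    refine Finset.sum_congr rfl fun i _ => Finset.sum_congr rfl fun l _ =>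
      Finset.sum_congr rfl fun k _ => ?_
    ring
  exact ⟨hsolve, fun Xg _ hu => (hu Xp hsolve).symm⟩
end
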